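/- Let K = ⋃_{ℓ=1}^L [a_ℓ, b_ℓ] ⊆ [−1,1] with −1 = a_1 < b_1 < a_2 < ⋯ < a_L < b_L = 1, let w be continuous and strictly positive on K, and let P be a real polynomial of degree at most N. Then lim_{d→∞} sslash P sslash_d = ‖P/w‖_{L1(K)}. -/

import Mathlib

open MeasureTheory Filter Polynomial

/-- The `(d+1) × (d+1)` symmetric Toeplitz matrix built from a vector `y ∈ ℝ^{d+1}`,
with entries `y_{|i−j|}`. -/
noncomputable def toepFin (d : ℕ) (y : Fin (d + 1) → ℝ) :
    Matrix (Fin (d + 1)) (Fin (d + 1)) ℝ :=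
  fun i j => y ⟨(((i : ℕ) : ℤ) - ((j : ℕ) : ℤ)).natAbs, by omega⟩

/-- The transplantation `P_ℓ(x) = P(((bℓ−aℓ)x + aℓ + bℓ)/2)` of a polynomial
from `[aℓ, bℓ]` to `[-1, 1]`. -/
noncomputable def transplant (aℓ bℓ : ℝ) (P : Polynomial ℝ) : Polynomial ℝ :=
  P.comp (Polynomial.C ((bℓ - aℓ) / 2) * Polynomial.X + Polynomial.C ((aℓ + bℓ) / 2))

/-- The entries `J^ℓ_{k,n} = ∫_0^π cos(kθ) sin((n+1)θ) / w_ℓ(cos θ) dθ`, where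
`w_ℓ(x) = w(((bℓ−aℓ)x + aℓ + bℓ)/2)` is the transplantation of the weight `w`. -/
noncomputable def Jent (aℓ bℓ : ℝ) (w : ℝ → ℝ) (k n : ℕ) : ℝ :=
  ∫ θ in (0:ℝ)..Real.pi,
    Real.cos (k * θ) * Real.sin ((n + 1) * θ) /
      w (((bℓ - aℓ) * Real.cos θ + aℓ + bℓ) / 2)

/-- The weighted `L1` norm `‖P/w‖_{L1(K)} = ∑_ℓ ∫_{a_ℓ}^{b_ℓ} |P(t)|/w(t) dt`
on `K = ⋃_{ℓ<L} [a ℓ, b ℓ]`. -/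
noncomputable def L1K (L : ℕ) (a b : ℕ → ℝ) (w : ℝ → ℝ) (P : Polynomial ℝ) : ℝ :=
  ∑ ℓ ∈ Finset.range L, ∫ t in (a ℓ)..(b ℓ), |P.eval t| / w t

/-- The ersatz norm `⫽P⫽_d`: the infimum of
`∑_ℓ ((b_ℓ−a_ℓ)/2)(y^{ℓ,+}_0 + y^{ℓ,−}_0)` over vectors `y^{ℓ,±} ∈ ℝ^{d+1}` with
`y^{ℓ,+} − y^{ℓ,−} = J^{ℓ,d} W^ℓ p` and `Toep_d(y^{ℓ,±}) ⪰ 0`, where `q ℓ = W^ℓ p` is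
the vector of second-kind Chebyshev coefficients of the transplantation `P_ℓ`. -/
noncomputable def ersatz (L N d : ℕ) (a b : ℕ → ℝ) (w : ℝ → ℝ) (P : Polynomial ℝ) : ℝ :=
  sInf { s : ℝ |
    ∃ q : ℕ → Fin (N + 1) → ℝ,
      (∀ ℓ < L, transplant (a ℓ) (b ℓ) P
          = ∑ n : Fin (N + 1), Polynomial.C (q ℓ n) * Polynomial.Chebyshev.U ℝ ((n : ℕ) : ℤ)) ∧
      ∃ yp ym : ℕ → Fin (d + 1) → ℝ,
        (∀ ℓ < L, ∀ k : Fin (d + 1),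
            yp ℓ k - ym ℓ k
              = ∑ n : Fin (N + 1), Jent (a ℓ) (b ℓ) w (k : ℕ) (n : ℕ) * q ℓ n) ∧
        (∀ ℓ < L, (toepFin d (yp ℓ)).PosSemidef ∧ (toepFin d (ym ℓ)).PosSemidef) ∧
        s = ∑ ℓ ∈ Finset.range L, ((b ℓ - a ℓ) / 2) * (yp ℓ 0 + ym ℓ 0) }

lemma seq_expand (S : Polynomial.Sequence ℝ) (N : ℕ) (P : Polynomial ℝ) (hP : P.natDegree ≤ N) :
    ∃ c : ℕ → ℝ, P = ∑ n ∈ Finset.range (N + 1), Polynomial.C (c n) * S n := by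
  have h1 : P ∈ Submodule.span ℝ (S '' Set.Iic N) := by
    rw [S.span_degreeLE (fun i _ => isUnit_iff_ne_zero.2 (by simp [S.ne_zero]))]
    rw [Polynomial.mem_degreeLE]
    exact Polynomial.natDegree_le_iff_degree_le.1 hP
  have h2 : (S '' Set.Iic N) = S '' (Finset.range (N + 1) : Set ℕ) := by
    congr 1; ext x; simp
  rw [h2, Submodule.mem_span_image_finset_iff_exists_fun] at h1
  obtain ⟨c, hc⟩ := h1
  refine ⟨fun n => if h : n ∈ Finset.range (N + 1) then c ⟨n, h⟩ else 0, ?_⟩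
  rw [← hc, ← Finset.sum_coe_sort (Finset.range (N + 1))]
  refine Finset.sum_congr rfl fun n _ => ?_
  rw [Polynomial.smul_eq_C_mul]
  beta_reduce
  rw [dif_pos n.2]

lemma U_expand (N : ℕ) (P : Polynomial ℝ) (hP : P.natDegree ≤ N) :
    ∃ c : Fin (N + 1) → ℝ,
      P = ∑ n : Fin (N + 1), Polynomial.C (c n) * Polynomial.Chebyshev.U ℝ ((n : ℕ) : ℤ) := by
  obtain ⟨c, hc⟩ := seq_expand ⟨fun n : ℕ => Polynomial.Chebyshev.U ℝ (n : ℤ),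
    fun n => Polynomial.Chebyshev.degree_U_natCast ℝ n⟩ N P hP
  refine ⟨fun n => c n, ?_⟩
  rw [Fin.sum_univ_eq_sum_range (fun n : ℕ => Polynomial.C (c n) * Polynomial.Chebyshev.U ℝ (n : ℤ))]
  exact hc

lemma T_expand (G : Polynomial ℝ) :
    ∃ (m : ℕ) (c : ℕ → ℝ), ∀ θ : ℝ,
      G.eval (Real.cos θ) = ∑ k ∈ Finset.range m, c k * Real.cos (k * θ) := by
  obtain ⟨c, hc⟩ := seq_expand ⟨fun n : ℕ => Polynomial.Chebyshev.T ℝ (n : ℤ),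
    fun n => by simp [Polynomial.Chebyshev.degree_T]⟩ G.natDegree G le_rfl
  refine ⟨G.natDegree + 1, c, fun θ => ?_⟩
  conv_lhs => rw [hc]
  rw [Polynomial.eval_finsetSum]
  refine Finset.sum_congr rfl fun k _ => ?_
  have := Polynomial.Chebyshev.T_real_cos θ (k : ℤ)
  push_cast at this
  rw [Polynomial.eval_mul, Polynomial.eval_C, ← this]

lemma int_cos (z : ℤ) : ∫ θ in (0:ℝ)..Real.pi, Real.cos (z * θ) = if z = 0 then Real.pi else 0 := by
  split_ifs with h
  · simp [h]
  · have hz : (z : ℝ) ≠ 0 := by exact_mod_cast h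
    rw [intervalIntegral.integral_comp_mul_left (fun x => Real.cos x) hz]
    simp [integral_cos, Real.sin_int_mul_pi]

lemma int_cos_cos (z : ℤ) (k : ℕ) :
    ∫ θ in (0:ℝ)..Real.pi, Real.cos (z * θ) * Real.cos (k * θ)
      = Real.pi / 2 * ((if z = k then 1 else 0) + (if -z = k then 1 else 0)) := by
  have h : ∀ θ : ℝ, Real.cos (z * θ) * Real.cos (k * θ)
      = (1/2) * (Real.cos ((z - k : ℤ) * θ) + Real.cos ((z + k : ℤ) * θ)) := by
    intro θ
    have := Real.two_mul_cos_mul_cos (z * θ) (k * θ)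
    push_cast
    rw [sub_mul, add_mul]; linarith
  simp_rw [h]
  rw [intervalIntegral.integral_const_mul, intervalIntegral.integral_add, int_cos, int_cos]
  · have e1 : (z - k = 0) ↔ z = k := by omega
    have e2 : (z + k = 0) ↔ -z = k := by omega
    simp only [e1, e2]
    split_ifs <;> ring
  · exact Continuous.intervalIntegrable (by fun_prop) _ _
  · exact Continuous.intervalIntegrable (by fun_prop) _ _

lemma count_diag (n k : ℕ) (hk : k ≤ n) :
    ∑ i ∈ Finset.range n, ∑ j ∈ Finset.range n, (if ((i:ℤ) - (j:ℤ)) = k then (1:ℝ) else 0)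
      = n - k := by
  rw [Finset.sum_comm]
  have h : ∀ j ∈ Finset.range n, ∑ i ∈ Finset.range n, (if ((i:ℤ) - (j:ℤ)) = k then (1:ℝ) else 0)
      = if j ∈ Finset.range (n - k) then 1 else 0 := by
    intro j hj
    have e : ∀ i : ℕ, (((i:ℤ) - (j:ℤ)) = k) ↔ (i = j + k) := by intro i; omega
    simp only [e, Finset.sum_ite_eq', Finset.mem_range]
    congr 1
    simp; omega
  rw [Finset.sum_congr rfl h, Finset.sum_ite_mem, Finset.inter_eq_right.2]
  · simp [Nat.cast_sub hk]
  · intro x; simp; omega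

/-- Fejér-type sum. -/
noncomputable def fejerSum (n : ℕ) (Y : ℕ → ℝ) (θ : ℝ) : ℝ :=
  ∑ i ∈ Finset.range n, ∑ j ∈ Finset.range n,
    Y ((i:ℤ) - (j:ℤ)).natAbs * Real.cos (((i:ℤ) - (j:ℤ) : ℤ) * θ)

lemma fejerSum_cont (n : ℕ) (Y : ℕ → ℝ) : Continuous (fejerSum n Y) := by
  unfold fejerSum; fun_prop

lemma fejerSum_moment (n : ℕ) (Y : ℕ → ℝ) (k : ℕ) (hk : k ≤ n) :
    ∫ θ in (0:ℝ)..Real.pi, fejerSum n Y θ * Real.cos (k * θ) = Real.pi * (n - k) * Y k := by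
  unfold fejerSum
  simp_rw [Finset.sum_mul, mul_assoc]
  rw [intervalIntegral.integral_finsetSum
    (fun i _ => Continuous.intervalIntegrable (by fun_prop) _ _)]
  have h : ∀ i ∈ Finset.range n, ∫ θ in (0:ℝ)..Real.pi, ∑ j ∈ Finset.range n,
      Y ((i:ℤ) - (j:ℤ)).natAbs * (Real.cos (((i:ℤ) - (j:ℤ) : ℤ) * θ) * Real.cos (k * θ))
      = ∑ j ∈ Finset.range n, (Real.pi / 2 * Y k * (if ((i:ℤ) - (j:ℤ)) = k then (1:ℝ) else 0)
        + Real.pi / 2 * Y k * (if ((j:ℤ) - (i:ℤ)) = k then (1:ℝ) else 0)) := by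
    intro i _
    rw [intervalIntegral.integral_finsetSum
      (fun i _ => Continuous.intervalIntegrable (by fun_prop) _ _)]
    refine Finset.sum_congr rfl fun j _ => ?_
    rw [intervalIntegral.integral_const_mul, int_cos_cos, neg_sub]
    by_cases h1 : ((i:ℤ) - (j:ℤ)).natAbs = k
    · rw [h1]; ring
    · rw [if_neg (by omega), if_neg (by omega)]; ring
  rw [Finset.sum_congr rfl h]
  simp_rw [Finset.sum_add_distrib, ← Finset.mul_sum]
  rw [count_diag n k hk, Finset.sum_comm, count_diag n k hk]
  ring

lemma fejerSum_nonneg (n : ℕ) (Y : ℕ → ℝ)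
    (hY : ∀ v : ℕ → ℝ, 0 ≤ ∑ i ∈ Finset.range n, ∑ j ∈ Finset.range n,
      v i * v j * Y ((i:ℤ) - (j:ℤ)).natAbs) (θ : ℝ) : 0 ≤ fejerSum n Y θ := by
  have h := add_nonneg (hY (fun i => Real.cos (i * θ))) (hY (fun i => Real.sin (i * θ)))
  rw [← Finset.sum_add_distrib] at h
  refine h.trans_eq ?_
  unfold fejerSum
  refine Finset.sum_congr rfl fun i _ => ?_
  rw [← Finset.sum_add_distrib]
  refine Finset.sum_congr rfl fun j _ => ?_
  push_cast
  rw [sub_mul, Real.cos_sub]; ring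

lemma abs_le_zero_entry (n : ℕ) (Y : ℕ → ℝ)
    (hF : ∀ θ, 0 ≤ fejerSum n Y θ) (g : ℕ → ℝ) (m : ℕ) (hm : m ≤ n)
    (hg : ∀ θ ∈ Set.Icc 0 Real.pi, |∑ k ∈ Finset.range m, g k * Real.cos (k * θ)| ≤ 1) :
    |∑ k ∈ Finset.range m, g k * ((n - k) * Y k)| ≤ n * Y 0 := by
  have h0 := fejerSum_moment n Y 0 (Nat.zero_le _)
  have h1 : ∫ θ in (0:ℝ)..Real.pi, fejerSum n Y θ * ∑ k ∈ Finset.range m, g k * Real.cos (k * θ)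
      = Real.pi * ∑ k ∈ Finset.range m, g k * ((n - k) * Y k) := by
    have hc := fejerSum_cont n Y
    simp_rw [Finset.mul_sum]
    rw [intervalIntegral.integral_finsetSum
      (fun i _ => Continuous.intervalIntegrable (by fun_prop) _ _)]
    refine Finset.sum_congr rfl fun k hk => ?_
    have := fejerSum_moment n Y k ((Finset.mem_range.1 hk).le.trans hm)
    rw [show Real.pi * (g k * ((n - k) * Y k)) = g k * (Real.pi * (n - k) * Y k) by ring, ← this,
      ← intervalIntegral.integral_const_mul]
    congr 1; ext θ; ring
  have h2 : |∫ θ in (0:ℝ)..Real.pi, fejerSum n Y θ * ∑ k ∈ Finset.range m, g k * Real.cos (k * θ)|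
      ≤ ∫ θ in (0:ℝ)..Real.pi, fejerSum n Y θ * Real.cos ((0:ℕ) * θ) := by
    have hc := fejerSum_cont n Y
    refine (intervalIntegral.abs_integral_le_integral_abs Real.pi_pos.le).trans ?_
    refine intervalIntegral.integral_mono_on Real.pi_pos.le
      (Continuous.intervalIntegrable (by fun_prop) _ _)
      (Continuous.intervalIntegrable (by fun_prop) _ _) fun θ hθ => ?_
    rw [abs_mul, abs_of_nonneg (hF θ)]
    simp only [Nat.cast_zero, zero_mul, Real.cos_zero]
    exact mul_le_mul_of_nonneg_left (hg θ hθ) (hF θ)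
  rw [h1, h0, abs_mul, abs_of_pos Real.pi_pos, mul_assoc] at h2
  have := le_of_mul_le_mul_left h2 Real.pi_pos
  simpa using this

lemma functional_bound (n : ℕ) (Y : ℕ → ℝ)
    (hF : ∀ θ, 0 ≤ fejerSum n Y θ) (g : ℕ → ℝ) (m : ℕ) (hm : 2 * m ≤ n) (hn : 0 < n)
    (hg : ∀ θ ∈ Set.Icc 0 Real.pi, |∑ k ∈ Finset.range m, g k * Real.cos (k * θ)| ≤ 1) :
    |∑ k ∈ Finset.range m, g k * Y k| ≤
      Y 0 * (1 + (2 * ∑ k ∈ Finset.range m, k * |g k|) / n) := by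
  have hn' : (0:ℝ) < n := by exact_mod_cast hn
  have hY0 : ∀ k ∈ Finset.range m, |Y k| ≤ 2 * Y 0 := by
    intro k hk
    have hk := Finset.mem_range.1 hk
    have := abs_le_zero_entry n Y hF (Pi.single k 1) (k + 1) (by omega) (by
      intro θ _
      rw [Finset.sum_eq_single k]
      · simpa using Real.abs_cos_le_one _
      · intro b _ hb; simp [hb]
      · simp)
    rw [Finset.sum_eq_single k (by intro b _ hb; simp [hb]) (by simp)] at this
    have h2 : (2:ℝ) * k ≤ n := by exact_mod_cast (by omega : 2 * k ≤ n)
    have h3 : (0:ℝ) ≤ n - k := by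
      have : (0:ℝ) ≤ k := by positivity
      linarith
    rw [Pi.single_eq_same, one_mul, abs_mul, abs_of_nonneg h3] at this
    have h4 : (n:ℝ) / 2 * |Y k| ≤ (n - k) * |Y k| :=
      mul_le_mul_of_nonneg_right (by linarith) (abs_nonneg _)
    have h5 : (n:ℝ) * |Y k| ≤ n * (2 * Y 0) := by linarith
    exact le_of_mul_le_mul_left h5 hn'
  have h1 := abs_le_zero_entry n Y hF g m (by omega) hg
  have h2 : n * ∑ k ∈ Finset.range m, g k * Y k
      = ∑ k ∈ Finset.range m, g k * ((n - k) * Y k) + ∑ k ∈ Finset.range m, k * g k * Y k := by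
    rw [Finset.mul_sum, ← Finset.sum_add_distrib]
    exact Finset.sum_congr rfl fun k _ => by ring
  have h3 : |∑ k ∈ Finset.range m, k * g k * Y k|
      ≤ (2 * ∑ k ∈ Finset.range m, k * |g k|) * Y 0 := by
    refine (Finset.abs_sum_le_sum_abs _ _).trans ?_
    rw [Finset.mul_sum, Finset.sum_mul]
    refine Finset.sum_le_sum fun k hk => ?_
    rw [abs_mul, abs_mul, Nat.abs_cast]
    have := mul_le_mul_of_nonneg_left (hY0 k hk) (by positivity : 0 ≤ (k:ℝ) * |g k|)
    linarith
  have h4 : n * |∑ k ∈ Finset.range m, g k * Y k| ≤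
      n * (Y 0 * (1 + (2 * ∑ k ∈ Finset.range m, k * |g k|) / n)) := by
    rw [← Nat.abs_cast n, ← abs_mul, Nat.abs_cast, h2]
    refine (abs_add_le _ _).trans ((add_le_add h1 h3).trans_eq ?_)
    field_simp
  exact le_of_mul_le_mul_left h4 hn'

lemma approx_sign (f : ℝ → ℝ) (hf : ContinuousOn f (Set.Icc 0 Real.pi)) (η : ℝ) (hη : 0 < η) :
    ∃ (m : ℕ) (g : ℕ → ℝ),
      (∀ θ ∈ Set.Icc 0 Real.pi, |∑ k ∈ Finset.range m, g k * Real.cos (k * θ)| ≤ 1) ∧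
      (∫ θ in (0:ℝ)..Real.pi, |f θ|) - η ≤
        ∫ θ in (0:ℝ)..Real.pi, f θ * ∑ k ∈ Finset.range m, g k * Real.cos (k * θ) := by
  set M := ∫ θ in (0:ℝ)..Real.pi, |f θ| with hM
  have hM0 : 0 ≤ M := intervalIntegral.integral_nonneg Real.pi_pos.le fun _ _ => abs_nonneg _
  have hpi := Real.pi_pos
  obtain ⟨ε, hε0, hε1, hε⟩ : ∃ ε : ℝ, 0 < ε ∧ ε ≤ 1 ∧ ε * (2 * M + Real.pi) ≤ η := by
    refine ⟨min 1 (η / (2 * M + Real.pi)), by positivity, min_le_left _ _, ?_⟩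
    exact (mul_le_mul_of_nonneg_right (min_le_right _ _) (by positivity)).trans_eq
      (div_mul_cancel₀ _ (by positivity))
  have hcont : ContinuousOn (fun x => (1 - ε) * (f (Real.arccos x) / (|f (Real.arccos x)| + ε)))
      (Set.Icc (-1) 1) := by
    have h1 : ContinuousOn (fun x => f (Real.arccos x)) (Set.Icc (-1) 1) :=
      hf.comp Real.continuous_arccos.continuousOn
        (fun x _ => ⟨Real.arccos_nonneg x, Real.arccos_le_pi x⟩)
    refine continuousOn_const.mul (h1.div (h1.abs.add continuousOn_const) fun x _ => ?_)
    positivity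
  obtain ⟨G, hG⟩ := exists_polynomial_near_of_continuousOn (-1) 1 _ hcont ε hε0
  obtain ⟨m, g, hg⟩ := T_expand G
  have key : ∀ θ ∈ Set.Icc 0 Real.pi,
      |G.eval (Real.cos θ) - (1 - ε) * (f θ / (|f θ| + ε))| < ε := by
    intro θ hθ
    have := hG (Real.cos θ) ⟨Real.neg_one_le_cos θ, Real.cos_le_one θ⟩
    rwa [Real.arccos_cos hθ.1 hθ.2] at this
  refine ⟨m, g, ?_, ?_⟩
  · intro θ hθ
    rw [← hg]
    have h1 := key θ hθ
    have h2 : |f θ / (|f θ| + ε)| ≤ 1 := by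
      rw [abs_div, abs_of_pos (by positivity : 0 < |f θ| + ε)]
      exact div_le_one_of_le₀ (by linarith) (by positivity)
    have h3 : |(1 - ε) * (f θ / (|f θ| + ε))| ≤ 1 - ε := by
      rw [abs_mul, abs_of_nonneg (by linarith : 0 ≤ 1 - ε)]
      exact mul_le_of_le_one_right (by linarith) h2
    rw [abs_lt] at h1; rw [abs_le] at *
    constructor <;> linarith [h1.1, h1.2, h3.1, h3.2]
  · simp_rw [← hg]
    have hfu : ContinuousOn f (Set.uIcc 0 Real.pi) := by rwa [Set.uIcc_of_le hpi.le]
    have i1 : IntervalIntegrable (fun θ => |f θ|) volume 0 Real.pi :=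
      hfu.abs.intervalIntegrable
    have i2 : IntervalIntegrable (fun θ => f θ * G.eval (Real.cos θ)) volume 0 Real.pi :=
      (hfu.mul (Continuous.continuousOn (by fun_prop))).intervalIntegrable
    have h := intervalIntegral.integral_mono_on hpi.le
      (f := fun θ => |f θ| - (ε * (2 * |f θ|) + ε)) (g := fun θ => f θ * G.eval (Real.cos θ))
      (i1.sub (((i1.const_mul 2).const_mul ε).add intervalIntegrable_const)) i2 ?_
    · rw [intervalIntegral.integral_sub i1
        (((i1.const_mul 2).const_mul ε).add intervalIntegrable_const),
        intervalIntegral.integral_add ((i1.const_mul 2).const_mul ε) intervalIntegrable_const,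
        intervalIntegral.integral_const_mul, intervalIntegral.integral_const_mul,
        intervalIntegral.integral_const, ← hM] at h
      simp only [smul_eq_mul, sub_zero] at h
      linarith
    · intro θ hθ
      have h1 := key θ hθ
      have h2 : |f θ| - ε ≤ f θ * (f θ / (|f θ| + ε)) := by
        rw [← mul_div_assoc, le_div_iff₀ (by positivity), ← abs_mul_abs_self (f θ)]
        nlinarith
      have h3 : |f θ * (G.eval (Real.cos θ) - (1 - ε) * (f θ / (|f θ| + ε)))| ≤ |f θ| * ε := by
        rw [abs_mul]
        exact mul_le_mul_of_nonneg_left h1.le (abs_nonneg _)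
      have h4 := (abs_le.1 h3).1
      have h5 := mul_le_mul_of_nonneg_left h2 (by linarith : 0 ≤ 1 - ε)
      nlinarith

lemma psd_form (d : ℕ) (y : Fin (d + 1) → ℝ) (h : (toepFin d y).PosSemidef) (θ : ℝ) :
    0 ≤ fejerSum (d + 1) (fun k => if h : k < d + 1 then y ⟨k, h⟩ else 0) θ := by
  refine fejerSum_nonneg _ _ (fun v => ?_) θ
  have h1 := h.dotProduct_mulVec_nonneg (fun i : Fin (d + 1) => v i)
  refine h1.trans_eq ?_
  simp only [dotProduct, Matrix.mulVec, Finset.sum_range, Finset.mul_sum]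
  refine Finset.sum_congr rfl fun i _ => Finset.sum_congr rfl fun j _ => ?_
  rw [dif_pos (by omega)]
  simp [toepFin]
  ring

lemma lower_core (f : ℝ → ℝ) (hf : ContinuousOn f (Set.Icc 0 Real.pi)) (η : ℝ) (hη : 0 < η) :
    ∀ᶠ d : ℕ in atTop, ∀ yp ym : Fin (d + 1) → ℝ,
      (toepFin d yp).PosSemidef → (toepFin d ym).PosSemidef →
      (∀ k : Fin (d + 1), yp k - ym k = ∫ θ in (0:ℝ)..Real.pi, Real.cos ((k:ℕ) * θ) * f θ) →
      (∫ θ in (0:ℝ)..Real.pi, |f θ|) - η ≤ yp 0 + ym 0 := by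
  obtain ⟨m, g, hg, hint⟩ := approx_sign f hf (η / 2) (by positivity)
  set M := ∫ θ in (0:ℝ)..Real.pi, |f θ| with hM
  have hM0 : 0 ≤ M := intervalIntegral.integral_nonneg Real.pi_pos.le fun _ _ => abs_nonneg _
  set C := 2 * ∑ k ∈ Finset.range m, (k:ℝ) * |g k| with hC
  have hC0 : 0 ≤ C := by positivity
  have hlim : ∀ᶠ d : ℕ in atTop, M * C / ((d:ℝ) + 1) < η / 2 := by
    have : Tendsto (fun d : ℕ => M * C / ((d:ℝ) + 1)) atTop (nhds 0) :=
      tendsto_const_nhds.div_atTop (tendsto_atTop_add_const_right _ _ tendsto_natCast_atTop_atTop)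
    exact this.eventually_lt_const (by positivity)
  filter_upwards [hlim, eventually_ge_atTop (2 * m)] with d hd hdm yp ym hp hm hdiff
  have bp := functional_bound (d + 1) _ (psd_form d yp hp) g m (by omega) (by omega) hg
  have bm := functional_bound (d + 1) _ (psd_form d ym hm) g m (by omega) (by omega) hg
  rw [← hC] at bp bm
  have hfu : ContinuousOn f (Set.uIcc 0 Real.pi) := by rwa [Set.uIcc_of_le Real.pi_pos.le]
  have e : ∫ θ in (0:ℝ)..Real.pi, f θ * ∑ k ∈ Finset.range m, g k * Real.cos (k * θ)
      = ∑ k ∈ Finset.range m, g k * (fun k => if h : k < d + 1 then yp ⟨k, h⟩ else 0) k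
        - ∑ k ∈ Finset.range m, g k * (fun k => if h : k < d + 1 then ym ⟨k, h⟩ else 0) k := by
    simp_rw [Finset.mul_sum]
    have hi : ∀ k ∈ Finset.range m, IntervalIntegrable
        (fun θ => f θ * (g k * Real.cos (k * θ))) volume 0 Real.pi := fun k _ =>
      (hfu.mul (Continuous.continuousOn (by fun_prop))).intervalIntegrable
    rw [intervalIntegral.integral_finsetSum hi,
      ← Finset.sum_sub_distrib]
    refine Finset.sum_congr rfl fun k hk => ?_
    have hk' : k < d + 1 := by have := Finset.mem_range.1 hk; omega
    simp only [dif_pos hk']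
    rw [← mul_sub, hdiff ⟨k, hk'⟩, ← intervalIntegral.integral_const_mul]
    congr 1; ext θ; ring
  rw [e] at hint
  have z0 : ∀ y : Fin (d + 1) → ℝ, (if h : 0 < d + 1 then y ⟨0, h⟩ else 0) = y 0 := by
    intro y; rw [dif_pos (Nat.succ_pos d)]; rfl
  simp only [z0] at bp bm
  by_contra hcon
  push Not at hcon
  have b1 := (abs_le.1 bp).2
  have b2 := (abs_le.1 bm).1
  push_cast at b1 b2
  have b3 : M - η / 2 ≤ (yp 0 + ym 0) * (1 + C / ((d:ℝ) + 1)) := by linarith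
  have b4 : (yp 0 + ym 0) * (C / ((d:ℝ) + 1)) ≤ M * (C / ((d:ℝ) + 1)) :=
    mul_le_mul_of_nonneg_right (by linarith) (by positivity)
  rw [← mul_div_assoc] at b4
  rw [mul_div_assoc] at hd b4
  nlinarith

lemma psd_of_nonneg (d : ℕ) (u : ℝ → ℝ) (hu : ContinuousOn u (Set.Icc 0 Real.pi))
    (hu0 : ∀ θ, 0 ≤ u θ) :
    (toepFin d (fun k => ∫ θ in (0:ℝ)..Real.pi, Real.cos ((k:ℕ) * θ) * u θ)).PosSemidef := by
  have huu : ContinuousOn u (Set.uIcc 0 Real.pi) := by rwa [Set.uIcc_of_le Real.pi_pos.le]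
  have hent : ∀ i j : Fin (d + 1),
      toepFin d (fun k => ∫ θ in (0:ℝ)..Real.pi, Real.cos ((k:ℕ) * θ) * u θ) i j
        = ∫ θ in (0:ℝ)..Real.pi, Real.cos (((i:ℕ):ℝ) * θ - ((j:ℕ):ℝ) * θ) * u θ := by
    intro i j
    simp only [toepFin]
    congr 1; ext θ; congr 1
    rw [Nat.cast_natAbs, ← sub_mul]
    push_cast
    rcases abs_cases (((i:ℕ):ℝ) - ((j:ℕ):ℝ)) with h | h
    · rw [h.1]
    · rw [h.1, neg_mul, Real.cos_neg]
  refine Matrix.PosSemidef.of_dotProduct_mulVec_nonneg ?_ ?_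
  · ext i j
    simp only [Matrix.conjTranspose_apply, star_trivial, hent]
    congr 1; ext θ
    rw [← Real.cos_neg, neg_sub]
  · intro v
    have hcv : ∀ i j : Fin (d + 1), IntervalIntegrable (fun θ => v i *
        ((Real.cos (((i:ℕ):ℝ) * θ - ((j:ℕ):ℝ) * θ) * u θ) * v j)) volume 0 Real.pi := fun i j =>
      (((((Continuous.continuousOn (by fun_prop)).mul huu).mul
        continuousOn_const).intervalIntegrable).const_mul (v i))
    have : star v ⬝ᵥ (toepFin d
        (fun k => ∫ θ in (0:ℝ)..Real.pi, Real.cos ((k:ℕ) * θ) * u θ)).mulVec v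
        = ∫ θ in (0:ℝ)..Real.pi, ∑ i : Fin (d + 1), ∑ j : Fin (d + 1), v i *
          ((Real.cos (((i:ℕ):ℝ) * θ - ((j:ℕ):ℝ) * θ) * u θ) * v j) := by
      have hi : ∀ i ∈ (Finset.univ : Finset (Fin (d + 1))), IntervalIntegrable
          (fun θ : ℝ => ∑ j : Fin (d + 1), v i *
            ((Real.cos (((i:ℕ):ℝ) * θ - ((j:ℕ):ℝ) * θ) * u θ) * v j)) volume 0 Real.pi := by
        intro i _
        refine ContinuousOn.intervalIntegrable (continuousOn_finsetSum _ fun j _ => ?_)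
        exact continuousOn_const.mul
          (((Continuous.continuousOn (by fun_prop)).mul huu).mul continuousOn_const)
      rw [intervalIntegral.integral_finsetSum hi]
      simp only [dotProduct, Matrix.mulVec, Finset.mul_sum, star_trivial]
      refine Finset.sum_congr rfl fun i _ => ?_
      rw [intervalIntegral.integral_finsetSum (fun j _ => hcv i j)]
      refine Finset.sum_congr rfl fun j _ => ?_
      rw [hent, intervalIntegral.integral_const_mul, intervalIntegral.integral_mul_const]
    rw [this]
    refine intervalIntegral.integral_nonneg Real.pi_pos.le fun θ _ => ?_
    have e : ∑ i : Fin (d + 1), ∑ j : Fin (d + 1), v i * ((Real.cos (((i:ℕ):ℝ) * θ - ((j:ℕ):ℝ) * θ) * u θ) * v j)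
        = u θ * ((∑ i : Fin (d + 1), v i * Real.cos ((i:ℕ) * θ)) *
            (∑ i : Fin (d + 1), v i * Real.cos ((i:ℕ) * θ))
          + (∑ i : Fin (d + 1), v i * Real.sin ((i:ℕ) * θ)) *
            (∑ i : Fin (d + 1), v i * Real.sin ((i:ℕ) * θ))) := by
      rw [Finset.sum_mul_sum, Finset.sum_mul_sum, ← Finset.sum_add_distrib, Finset.mul_sum]
      refine Finset.sum_congr rfl fun i _ => ?_
      rw [← Finset.sum_add_distrib, Finset.mul_sum]
      refine Finset.sum_congr rfl fun j _ => ?_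
      rw [Real.cos_sub]; ring
    rw [e]
    exact mul_nonneg (hu0 θ) (add_nonneg (mul_self_nonneg _) (mul_self_nonneg _))

/-- The transplanted density in the angular variable. -/
noncomputable def dens (a b : ℝ) (w : ℝ → ℝ) (P : Polynomial ℝ) (θ : ℝ) : ℝ :=
  P.eval (((b - a) * Real.cos θ + a + b) / 2) * Real.sin θ /
    w (((b - a) * Real.cos θ + a + b) / 2)

lemma map_mem (a b : ℝ) (hab : a < b) (θ : ℝ) :
    ((b - a) * Real.cos θ + a + b) / 2 ∈ Set.Icc a b := by
  constructor <;> nlinarith [Real.neg_one_le_cos θ, Real.cos_le_one θ]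

lemma w_cont (a b : ℝ) (hab : a < b) (w : ℝ → ℝ) (hw : ContinuousOn w (Set.Icc a b)) :
    Continuous fun θ : ℝ => w (((b - a) * Real.cos θ + a + b) / 2) :=
  hw.comp_continuous (by fun_prop) (map_mem a b hab)

lemma dens_cont (a b : ℝ) (hab : a < b) (w : ℝ → ℝ) (hw : ContinuousOn w (Set.Icc a b))
    (hwpos : ∀ x ∈ Set.Icc a b, 0 < w x) (P : Polynomial ℝ) : Continuous (dens a b w P) := by
  unfold dens
  exact Continuous.div (by fun_prop) (w_cont a b hab w hw)
    fun θ => (hwpos _ (map_mem a b hab θ)).ne'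

lemma J_sum (a b : ℝ) (hab : a < b) (w : ℝ → ℝ) (hw : ContinuousOn w (Set.Icc a b))
    (hwpos : ∀ x ∈ Set.Icc a b, 0 < w x) (P : Polynomial ℝ) (N : ℕ) (q : Fin (N + 1) → ℝ)
    (hq : transplant a b P
      = ∑ n : Fin (N + 1), Polynomial.C (q n) * Polynomial.Chebyshev.U ℝ ((n : ℕ) : ℤ)) (k : ℕ) :
    ∑ n : Fin (N + 1), Jent a b w k (n : ℕ) * q n
      = ∫ θ in (0:ℝ)..Real.pi, Real.cos (k * θ) * dens a b w P θ := by
  have hwc := w_cont a b hab w hw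
  have hc : ∀ n : ℕ, Continuous fun θ : ℝ => Real.cos (k * θ) * Real.sin ((n + 1) * θ) /
      w (((b - a) * Real.cos θ + a + b) / 2) := fun n =>
    Continuous.div (by fun_prop) hwc fun θ => (hwpos _ (map_mem a b hab θ)).ne'
  unfold Jent
  simp_rw [← intervalIntegral.integral_mul_const]
  have hi : ∀ n ∈ (Finset.univ : Finset (Fin (N + 1))), IntervalIntegrable
      (fun θ : ℝ => Real.cos (k * θ) * Real.sin (((n:ℕ) + 1) * θ) /
        w (((b - a) * Real.cos θ + a + b) / 2) * q n) volume 0 Real.pi := fun n _ =>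
    ((hc n).mul continuous_const).intervalIntegrable _ _
  rw [← intervalIntegral.integral_finsetSum hi]
  congr 1; ext θ
  have h1 := congrArg (Polynomial.eval (Real.cos θ)) hq
  simp only [transplant, Polynomial.eval_comp, Polynomial.eval_add, Polynomial.eval_mul,
    Polynomial.eval_C, Polynomial.eval_X, Polynomial.eval_finsetSum] at h1
  have h2 : (b - a) / 2 * Real.cos θ + (a + b) / 2 = ((b - a) * Real.cos θ + a + b) / 2 := by ring
  rw [h2] at h1
  unfold dens
  rw [h1, Finset.sum_mul, Finset.sum_div, Finset.mul_sum]
  refine Finset.sum_congr rfl fun n _ => ?_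
  have h3 := Polynomial.Chebyshev.U_real_cos θ ((n:ℕ):ℤ)
  push_cast at h3
  rw [← h3]; ring

lemma L1_sub (a b : ℝ) (hab : a < b) (w : ℝ → ℝ) (hw : ContinuousOn w (Set.Icc a b))
    (hwpos : ∀ x ∈ Set.Icc a b, 0 < w x) (P : Polynomial ℝ) :
    (b - a) / 2 * ∫ θ in (0:ℝ)..Real.pi, |dens a b w P θ| = ∫ t in a..b, |P.eval t| / w t := by
  have h := intervalIntegral.integral_comp_mul_deriv' (a := 0) (b := Real.pi)
    (f := fun θ => ((b - a) * Real.cos θ + a + b) / 2)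
    (f' := fun θ => ((b - a) * (-Real.sin θ)) / 2)
    (g := fun t => |P.eval t| / w t)
    (fun θ _ => by
      have := ((((Real.hasDerivAt_cos θ).const_mul (b - a)).add_const a).add_const b).div_const 2
      exact this)
    (Continuous.continuousOn (by fun_prop))
    (by
      refine ContinuousOn.mono (s := Set.Icc a b) ?_ ?_
      · exact ContinuousOn.div (Continuous.continuousOn (by fun_prop)) hw
          fun x hx => (hwpos x hx).ne'
      · rintro _ ⟨θ, _, rfl⟩
        exact map_mem a b hab θ)
  simp only [Real.cos_zero, Real.cos_pi] at h
  rw [show ((b - a) * 1 + a + b) / 2 = b by ring, show ((b - a) * -1 + a + b) / 2 = a by ring,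
    intervalIntegral.integral_symm a b] at h
  rw [← intervalIntegral.integral_const_mul, ← neg_eq_iff_eq_neg.2 h,
    ← intervalIntegral.integral_neg]
  refine intervalIntegral.integral_congr fun θ hθ => ?_
  rw [Set.uIcc_of_le Real.pi_pos.le] at hθ
  have hs := Real.sin_nonneg_of_mem_Icc hθ
  have hwp := hwpos _ (map_mem a b hab θ)
  simp only [dens, Function.comp]
  rw [abs_div, abs_mul, abs_of_nonneg hs, abs_of_pos hwp]
  ring

lemma transplant_natDegree (a b : ℝ) (P : Polynomial ℝ) (N : ℕ) (hP : P.natDegree ≤ N) :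
    (transplant a b P).natDegree ≤ N := by
  unfold transplant
  rw [Polynomial.natDegree_comp]
  have : (Polynomial.C ((b - a) / 2) * Polynomial.X + Polynomial.C ((a + b) / 2)).natDegree ≤ 1 :=
    Polynomial.natDegree_linear_le
  nlinarith

/-- For `P` of degree at most `N`, the ersatz norms `⫽P⫽_d` converge to `‖P/w‖_{L1(K)}`
as `d → ∞`. -/
theorem ersatz_tendsto_L1
    (L : ℕ) (hL : 0 < L) (a b : ℕ → ℝ)
    (ha0 : a 0 = -1) (hbL : b (L - 1) = 1)
    (hab : ∀ ℓ < L, a ℓ < b ℓ)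
    (hgap : ∀ ℓ, ℓ + 1 < L → b ℓ < a (ℓ + 1))
    (w : ℝ → ℝ)
    (hw : ContinuousOn w (⋃ ℓ ∈ Finset.range L, Set.Icc (a ℓ) (b ℓ)))
    (hwpos : ∀ x ∈ ⋃ ℓ ∈ Finset.range L, Set.Icc (a ℓ) (b ℓ), 0 < w x)
    (N : ℕ) (P : Polynomial ℝ) (hP : P.natDegree ≤ N) :
    Tendsto (fun d => ersatz L N d a b w P) atTop (nhds (L1K L a b w P)) := by
  have hsub : ∀ ℓ < L, Set.Icc (a ℓ) (b ℓ) ⊆ ⋃ ℓ ∈ Finset.range L, Set.Icc (a ℓ) (b ℓ) := by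
    intro ℓ hℓ
    exact Set.subset_biUnion_of_mem (u := fun ℓ => Set.Icc (a ℓ) (b ℓ))
      (Finset.mem_coe.2 (Finset.mem_range.2 hℓ))
  have hwc : ∀ ℓ < L, ContinuousOn w (Set.Icc (a ℓ) (b ℓ)) := fun ℓ hℓ => hw.mono (hsub ℓ hℓ)
  have hwp : ∀ ℓ < L, ∀ x ∈ Set.Icc (a ℓ) (b ℓ), 0 < w x :=
    fun ℓ hℓ x hx => hwpos x (hsub ℓ hℓ hx)
  have hmem : ∀ d : ℕ, ∃ q : ℕ → Fin (N + 1) → ℝ,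
      (∀ ℓ < L, transplant (a ℓ) (b ℓ) P
          = ∑ n : Fin (N + 1), Polynomial.C (q ℓ n) * Polynomial.Chebyshev.U ℝ ((n : ℕ) : ℤ)) ∧
      ∃ yp ym : ℕ → Fin (d + 1) → ℝ,
        (∀ ℓ < L, ∀ k : Fin (d + 1),
            yp ℓ k - ym ℓ k
              = ∑ n : Fin (N + 1), Jent (a ℓ) (b ℓ) w (k : ℕ) (n : ℕ) * q ℓ n) ∧
        (∀ ℓ < L, (toepFin d (yp ℓ)).PosSemidef ∧ (toepFin d (ym ℓ)).PosSemidef) ∧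
        L1K L a b w P = ∑ ℓ ∈ Finset.range L, ((b ℓ - a ℓ) / 2) * (yp ℓ 0 + ym ℓ 0) := by
    intro d
    choose q hq using fun ℓ => U_expand N _ (transplant_natDegree (a ℓ) (b ℓ) P N hP)
    refine ⟨q, fun ℓ _ => hq ℓ,
      fun ℓ k => ∫ θ in (0:ℝ)..Real.pi, Real.cos ((k:ℕ) * θ) * max (dens (a ℓ) (b ℓ) w P θ) 0,
      fun ℓ k => ∫ θ in (0:ℝ)..Real.pi, Real.cos ((k:ℕ) * θ) * max (-dens (a ℓ) (b ℓ) w P θ) 0,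
      ?_, ?_, ?_⟩
    · intro ℓ hℓ k
      have hc := dens_cont _ _ (hab ℓ hℓ) w (hwc ℓ hℓ) (hwp ℓ hℓ) P
      rw [J_sum _ _ (hab ℓ hℓ) w (hwc ℓ hℓ) (hwp ℓ hℓ) P N _ (hq ℓ),
        ← intervalIntegral.integral_sub (Continuous.intervalIntegrable (by fun_prop) _ _)
          (Continuous.intervalIntegrable (by fun_prop) _ _)]
      congr 1; ext θ
      rw [← mul_sub]; congr 1
      rcases le_total 0 (dens (a ℓ) (b ℓ) w P θ) with h | h
      · rw [max_eq_left h, max_eq_right (by linarith)]; ring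
      · rw [max_eq_right h, max_eq_left (by linarith)]; ring
    · intro ℓ hℓ
      have hc := dens_cont _ _ (hab ℓ hℓ) w (hwc ℓ hℓ) (hwp ℓ hℓ) P
      exact ⟨psd_of_nonneg d _ (Continuous.continuousOn (by fun_prop)) fun θ => le_max_right _ _,
        psd_of_nonneg d _ (Continuous.continuousOn (by fun_prop)) fun θ => le_max_right _ _⟩
    · unfold L1K
      refine Finset.sum_congr rfl fun ℓ hℓ => ?_
      have hℓ := Finset.mem_range.1 hℓ
      have hc := dens_cont _ _ (hab ℓ hℓ) w (hwc ℓ hℓ) (hwp ℓ hℓ) P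
      rw [← L1_sub _ _ (hab ℓ hℓ) w (hwc ℓ hℓ) (hwp ℓ hℓ) P,
        ← intervalIntegral.integral_add (Continuous.intervalIntegrable (by fun_prop) _ _)
          (Continuous.intervalIntegrable (by fun_prop) _ _)]
      congr 2; ext θ
      simp only [Fin.val_zero, Nat.cast_zero, zero_mul, Real.cos_zero, one_mul]
      rcases le_total 0 (dens (a ℓ) (b ℓ) w P θ) with h | h
      · rw [max_eq_left h, max_eq_right (by linarith), abs_of_nonneg h]; ring
      · rw [max_eq_right h, max_eq_left (by linarith), abs_of_nonpos h]; ring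
  have hlow : ∀ η > 0, ∀ᶠ d : ℕ in atTop, ∀ s : ℝ, (∃ q : ℕ → Fin (N + 1) → ℝ,
      (∀ ℓ < L, transplant (a ℓ) (b ℓ) P
          = ∑ n : Fin (N + 1), Polynomial.C (q ℓ n) * Polynomial.Chebyshev.U ℝ ((n : ℕ) : ℤ)) ∧
      ∃ yp ym : ℕ → Fin (d + 1) → ℝ,
        (∀ ℓ < L, ∀ k : Fin (d + 1),
            yp ℓ k - ym ℓ k
              = ∑ n : Fin (N + 1), Jent (a ℓ) (b ℓ) w (k : ℕ) (n : ℕ) * q ℓ n) ∧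
        (∀ ℓ < L, (toepFin d (yp ℓ)).PosSemidef ∧ (toepFin d (ym ℓ)).PosSemidef) ∧
        s = ∑ ℓ ∈ Finset.range L, ((b ℓ - a ℓ) / 2) * (yp ℓ 0 + ym ℓ 0)) →
      L1K L a b w P - η ≤ s := by
    intro η hη
    set B := ∑ ℓ ∈ Finset.range L, (b ℓ - a ℓ) / 2 with hB
    have hBpos : 0 < B := Finset.sum_pos
      (fun ℓ hℓ => by have := hab ℓ (Finset.mem_range.1 hℓ); linarith)
      (Finset.nonempty_range_iff.2 hL.ne')
    have hev : ∀ᶠ d : ℕ in atTop, ∀ ℓ ∈ Finset.range L, ∀ yp ym : Fin (d + 1) → ℝ,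
        (toepFin d yp).PosSemidef → (toepFin d ym).PosSemidef →
        (∀ k : Fin (d + 1), yp k - ym k
          = ∫ θ in (0:ℝ)..Real.pi, Real.cos ((k:ℕ) * θ) * dens (a ℓ) (b ℓ) w P θ) →
        (∫ θ in (0:ℝ)..Real.pi, |dens (a ℓ) (b ℓ) w P θ|) - η / B ≤ yp 0 + ym 0 := by
      rw [Filter.eventually_all_finset]
      intro ℓ hℓ
      have hℓ := Finset.mem_range.1 hℓ
      exact lower_core _ (dens_cont _ _ (hab ℓ hℓ) w (hwc ℓ hℓ) (hwp ℓ hℓ) P).continuousOn _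
        (by positivity)
    filter_upwards [hev] with d hd s hs
    obtain ⟨q, hq, yp, ym, hdiff, hpsd, rfl⟩ := hs
    have : L1K L a b w P - η = ∑ ℓ ∈ Finset.range L, ((b ℓ - a ℓ) / 2) *
        ((∫ θ in (0:ℝ)..Real.pi, |dens (a ℓ) (b ℓ) w P θ|) - η / B) := by
      simp_rw [mul_sub]
      rw [Finset.sum_sub_distrib, ← Finset.sum_mul, ← hB, mul_div_cancel₀ _ hBpos.ne']
      congr 1
      refine Finset.sum_congr rfl fun ℓ hℓ => ?_
      have hℓ := Finset.mem_range.1 hℓ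
      exact (L1_sub _ _ (hab ℓ hℓ) w (hwc ℓ hℓ) (hwp ℓ hℓ) P).symm
    rw [this]
    refine Finset.sum_le_sum fun ℓ hℓ => ?_
    have hℓ' := Finset.mem_range.1 hℓ
    refine mul_le_mul_of_nonneg_left ?_ (by have := hab ℓ hℓ'; linarith)
    refine hd ℓ hℓ _ _ (hpsd ℓ hℓ').1 (hpsd ℓ hℓ').2 fun k => ?_
    rw [hdiff ℓ hℓ' k, J_sum _ _ (hab ℓ hℓ') w (hwc ℓ hℓ') (hwp ℓ hℓ') P N _ (hq ℓ hℓ')]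
  rw [Metric.tendsto_atTop']
  intro ε hε
  obtain ⟨D, hD⟩ := eventually_atTop.1 (hlow (ε / 2) (by positivity))
  refine ⟨D, fun d hd => ?_⟩
  have h1 : ersatz L N d a b w P ≤ L1K L a b w P :=
    csInf_le ⟨_, fun s hs => hD d (le_of_lt hd) s hs⟩ (hmem d)
  have h2 : L1K L a b w P - ε / 2 ≤ ersatz L N d a b w P :=
    le_csInf ⟨_, hmem d⟩ fun s hs => hD d (le_of_lt hd) s hs
  rw [Real.dist_eq, abs_lt]
  constructor <;> linarith
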